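/- arXiv:1902.08758 — 2 statements merged into one kernel-verified Lean document; each statement's English description precedes it below -/
import Mathlib

section
/- Let K be a field of characteristic 0, let d ≥ 1, and let δ be the K-algebra derivation of the polynomial ring K[x_1,…,x_d,y_1,…,y_d] determined by δ(x_i) = 0 and δ(y_i) = x_i for i = 1,…,d. Then the algebra of constants ker δ = {p : δ(p) = 0} is generated as a K-subalgebra of K[x_1,…,x_d,y_1,…,y_d] by the elements x_1,…,x_d together with the determinants u_{ij} = x_i·y_j − x_j·y_i for all 1 ≤ i < j ≤ d. -/
/-!
Write `∂x_i`, `∂y_i` for the partial derivatives and `Ω_ij = ∂x_i ∂y_j - ∂x_j ∂y_i` for Cayley's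
operators. Since `[∂x_i, δ] = ∂y_i` and `[∂y_j, δ] = 0`, every `Ω_ij` commutes with `δ` and hence
preserves `ker δ` (`omega_mem_ker`). Capelli's identity reads
`∑_{i,j} u_ij Ω_ij = 2 ((E_x + 1) E_y - Δ δ)`, where `E_x`, `E_y` are the Euler operators in the
two groups of variables and `Δ = ∑ y_j ∂x_j`. So if `f ∈ ker δ` is bihomogeneous of degree `a` in
the `x_i` and `b` in the `y_i`, then `∑_{i,j} u_ij (Ω_ij f) = 2 (a + 1) b f` (`capelli`).

In characteristic 0 this expresses `f`, when `b > 0`, through the `u_ij` and the constants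
`Ω_ij f` of lower degree `b - 1` in the `y_i`. By induction on `b` (`mem_of_bihomogeneous`), all
bihomogeneous constants lie in the subalgebra generated by the `x_i` and `u_ij`; when `b = 0` the
polynomial involves the `x_i` only. Finally `δ` is bihomogeneous of bidegree `(1, -1)`, so the
bihomogeneous components of a constant are constants.
-/

namespace Nowicki

open MvPolynomial

section General

variable {σ R : Type*} [CommRing R]

lemma pderiv_comm (i j : σ) (p : MvPolynomial σ R) :
    pderiv i (pderiv j p) = pderiv j (pderiv i p) := by
  classical
  have h : ⁅pderiv (R := R) i, pderiv (R := R) j⁆ = 0 := by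
    apply derivation_ext
    intro k
    simp only [Derivation.commutator_apply, pderiv_X, Derivation.coe_zero, Pi.zero_apply]
    simp only [Pi.single_apply]
    split_ifs <;> simp
  have := congrArg (fun D => D p) h
  simpa [Derivation.commutator_apply, sub_eq_zero] using this

/-- The natural subtraction is harmless: the derivative vanishes when `n < w i`. -/
lemma isWeightedHomogeneous_pderiv_sub {w : σ → ℕ} {n : ℕ} {p : MvPolynomial σ R}
    (h : IsWeightedHomogeneous w p n) (i : σ) :
    IsWeightedHomogeneous w (pderiv i p) (n - w i) := by
  intro m hm
  rw [coeff_pderiv] at hm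
  have := h (left_ne_zero_of_mul hm)
  rw [map_add, Finsupp.weight_single] at this
  simp only [one_smul] at this
  omega

lemma component_pderiv (w : σ → ℕ) (n : ℕ) (i : σ) (p : MvPolynomial σ R) :
    weightedHomogeneousComponent w n (pderiv i p) =
      pderiv i (weightedHomogeneousComponent w (n + w i) p) := by
  classical
  ext m
  simp only [coeff_weightedHomogeneousComponent, coeff_pderiv, map_add, Finsupp.weight_single,
    one_smul, add_left_inj]
  split_ifs <;> simp

lemma component_X_mul (w : σ → ℕ) (n : ℕ) (i : σ) (p : MvPolynomial σ R) :
    weightedHomogeneousComponent w (n + w i) (X i * p) =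
      X i * weightedHomogeneousComponent w n p := by
  classical
  ext m
  simp only [coeff_weightedHomogeneousComponent, coeff_X_mul']
  by_cases hi : i ∈ m.support
  · have h := Finsupp.weight_sub_single_add (w := w) (Finsupp.mem_support_iff.mp hi)
    simp only [hi, if_true, ← h, add_left_inj]
  · simp [hi]

lemma isWeightedHomogeneous_component {w w' : σ → ℕ} {n : ℕ} {p : MvPolynomial σ R}
    (h : IsWeightedHomogeneous w p n) (k : ℕ) :
    IsWeightedHomogeneous w (weightedHomogeneousComponent w' k p) n := by
  classical
  intro m hm
  rw [coeff_weightedHomogeneousComponent] at hm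
  exact h (ite_ne_right_iff.mp hm).2

lemma mem_of_component_mem {w : σ → ℕ} (S : Subalgebra R (MvPolynomial σ R))
    (p : MvPolynomial σ R) (h : ∀ n, weightedHomogeneousComponent w n p ∈ S) : p ∈ S := by
  rw [← finsum_weightedHomogeneousComponent w p]
  exact finsum_induction (· ∈ S) S.zero_mem (fun _ _ => S.add_mem) h

end General

variable {K : Type*} [Field K] {d : ℕ}

/-- The weight that counts the degree in the variables `x_i`. -/
def wx : Fin d ⊕ Fin d → ℕ := Sum.elim (fun _ => 1) (fun _ => 0)

/-- The weight that counts the degree in the variables `y_i`. -/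
def wy : Fin d ⊕ Fin d → ℕ := Sum.elim (fun _ => 0) (fun _ => 1)

/-- The derivation with `x_i ↦ 0` and `y_i ↦ x_i`. -/
noncomputable def del (K : Type*) [Field K] (d : ℕ) :
    Derivation K (MvPolynomial (Fin d ⊕ Fin d) K) (MvPolynomial (Fin d ⊕ Fin d) K) :=
  mkDerivation K (Sum.elim (fun _ => 0) (fun i => X (Sum.inl i)))

/-- The determinant `x_i y_j - x_j y_i`. -/
noncomputable def u (K : Type*) [Field K] {d : ℕ} (i j : Fin d) :
    MvPolynomial (Fin d ⊕ Fin d) K :=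
  X (Sum.inl i) * X (Sum.inr j) - X (Sum.inl j) * X (Sum.inr i)

/-- Cayley's operator `∂x_i ∂y_j - ∂x_j ∂y_i`. -/
noncomputable def omega (i j : Fin d) (p : MvPolynomial (Fin d ⊕ Fin d) K) :
    MvPolynomial (Fin d ⊕ Fin d) K :=
  pderiv (Sum.inl i) (pderiv (Sum.inr j) p) - pderiv (Sum.inl j) (pderiv (Sum.inr i) p)

lemma del_inl (i : Fin d) : del K d (X (Sum.inl i)) = 0 := by simp [del]

lemma del_inr (i : Fin d) : del K d (X (Sum.inr i)) = X (Sum.inl i) := by simp [del]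

lemma del_apply (p : MvPolynomial (Fin d ⊕ Fin d) K) :
    del K d p = ∑ k, X (Sum.inl k) * pderiv (Sum.inr k) p := by
  classical
  have hsum : ∀ (D : Fin d → Derivation K (MvPolynomial (Fin d ⊕ Fin d) K)
      (MvPolynomial (Fin d ⊕ Fin d) K)) q, (∑ k, D k) q = ∑ k, D k q := fun D q => by
    have := congrFun (map_sum Derivation.coeFnAddMonoidHom D Finset.univ) q
    rwa [Finset.sum_apply] at this
  have h : del K d = ∑ k, (X (Sum.inl k) : MvPolynomial (Fin d ⊕ Fin d) K) •
      (pderiv (Sum.inr k) : Derivation K _ (MvPolynomial (Fin d ⊕ Fin d) K)) := by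
    apply derivation_ext
    rintro (k | k)
    · simp [del_inl, hsum, pderiv_X]
    · simp [del_inr, hsum, pderiv_X, Pi.single_apply]
  rw [h]
  simp [hsum]

lemma pderiv_inl_del (i : Fin d) (p : MvPolynomial (Fin d ⊕ Fin d) K) :
    pderiv (Sum.inl i) (del K d p) =
      pderiv (Sum.inr i) p + del K d (pderiv (Sum.inl i) p) := by
  classical
  have h : ⁅pderiv (R := K) (σ := Fin d ⊕ Fin d) (Sum.inl i), del K d⁆ = pderiv (Sum.inr i) := by
    apply derivation_ext
    rintro (k | k)
    · simp only [Derivation.commutator_apply, del_inl, pderiv_X, Pi.single_apply]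
      split_ifs <;> simp_all
    · simp only [Derivation.commutator_apply, del_inr, pderiv_X, Pi.single_apply]
      split_ifs <;> simp_all
  rw [← h, Derivation.commutator_apply]
  ring

lemma pderiv_inr_del (i : Fin d) (p : MvPolynomial (Fin d ⊕ Fin d) K) :
    pderiv (Sum.inr i) (del K d p) = del K d (pderiv (Sum.inr i) p) := by
  classical
  have h : ⁅pderiv (R := K) (σ := Fin d ⊕ Fin d) (Sum.inr i), del K d⁆ = 0 := by
    apply derivation_ext
    rintro (k | k)
    · simp only [Derivation.commutator_apply, del_inl, pderiv_X, Pi.single_apply]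
      split_ifs <;> simp_all
    · simp only [Derivation.commutator_apply, del_inr, pderiv_X, Pi.single_apply]
      split_ifs <;> simp_all
  have := congrArg (fun D => D p) h
  simpa [Derivation.commutator_apply, sub_eq_zero] using this

lemma omega_mem_ker {p : MvPolynomial (Fin d ⊕ Fin d) K} (hp : del K d p = 0) (i j : Fin d) :
    del K d (omega i j p) = 0 := by
  have key : ∀ i j : Fin d, del K d (pderiv (Sum.inl i) (pderiv (Sum.inr j) p)) =
      - pderiv (Sum.inr i) (pderiv (Sum.inr j) p) := by
    intro i j
    have h := pderiv_inl_del i (pderiv (Sum.inr j) p)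
    rw [← pderiv_inr_del, hp, map_zero, map_zero] at h
    linear_combination -h
  rw [omega, map_sub, key, key, pderiv_comm (Sum.inr i) (Sum.inr j), sub_self]

lemma euler_x {a : ℕ} {p : MvPolynomial (Fin d ⊕ Fin d) K}
    (h : IsWeightedHomogeneous wx p a) :
    ∑ i, X (Sum.inl i) * pderiv (Sum.inl i) p = (a : MvPolynomial (Fin d ⊕ Fin d) K) * p := by
  simpa [wx, Fintype.sum_sum_type] using h.sum_weight_X_mul_pderiv

lemma euler_y {b : ℕ} {p : MvPolynomial (Fin d ⊕ Fin d) K}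
    (h : IsWeightedHomogeneous wy p b) :
    ∑ i, X (Sum.inr i) * pderiv (Sum.inr i) p = (b : MvPolynomial (Fin d ⊕ Fin d) K) * p := by
  simpa [wy, Fintype.sum_sum_type] using h.sum_weight_X_mul_pderiv

/-- Capelli's identity on bihomogeneous constants. The sum runs over all ordered pairs `(i, j)`,
so it is twice the usual one. -/
lemma capelli {a b : ℕ} {p : MvPolynomial (Fin d ⊕ Fin d) K}
    (ha : IsWeightedHomogeneous wx p a) (hb : IsWeightedHomogeneous wy p b)
    (hp : del K d p = 0) :
    ∑ i, ∑ j, u K i j * omega i j p =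
      (2 * (a + 1) * b : MvPolynomial (Fin d ⊕ Fin d) K) * p := by
  -- `E_x E_y p`, expanded
  have h1 : ∑ j, ∑ i, X (Sum.inr j) * (X (Sum.inl i) *
      pderiv (Sum.inl i) (pderiv (Sum.inr j) p)) =
      (a * b : MvPolynomial (Fin d ⊕ Fin d) K) * p := by
    have : ∀ j : Fin d, ∑ i, X (Sum.inr j) * (X (Sum.inl i) *
        pderiv (Sum.inl i) (pderiv (Sum.inr j) p)) =
        (a : MvPolynomial (Fin d ⊕ Fin d) K) * (X (Sum.inr j) * pderiv (Sum.inr j) p) := by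
      intro j
      have hj : IsWeightedHomogeneous wx (pderiv (Sum.inr j) p) a :=
        isWeightedHomogeneous_pderiv_sub ha (Sum.inr j)
      rw [← Finset.mul_sum, euler_x hj]
      ring
    rw [Finset.sum_congr rfl fun j _ => this j, ← Finset.mul_sum, euler_y hb]
    ring
  -- `Δ δ p = 0`, expanded
  have h2 : ∑ j, ∑ i, X (Sum.inr j) * (X (Sum.inl i) *
      pderiv (Sum.inl j) (pderiv (Sum.inr i) p)) =
      - ((b : MvPolynomial (Fin d ⊕ Fin d) K) * p) := by
    rw [← euler_y hb, ← Finset.sum_neg_distrib]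
    refine Finset.sum_congr rfl fun j _ => ?_
    have h := pderiv_inl_del j p
    rw [hp, map_zero, del_apply] at h
    simp only [pderiv_comm (Sum.inr _) (Sum.inl j)] at h
    rw [← Finset.mul_sum]
    linear_combination -(X (Sum.inr j)) * h
  have h1' := h1
  have h2' := h2
  rw [Finset.sum_comm] at h1' h2'
  have expand : ∑ i, ∑ j, u K i j * omega i j p =
      (∑ i, ∑ j, X (Sum.inr j) * (X (Sum.inl i) *
        pderiv (Sum.inl i) (pderiv (Sum.inr j) p))) -
      (∑ i, ∑ j, X (Sum.inr j) * (X (Sum.inl i) *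
        pderiv (Sum.inl j) (pderiv (Sum.inr i) p))) +
      ((∑ i, ∑ j, X (Sum.inr i) * (X (Sum.inl j) *
        pderiv (Sum.inl j) (pderiv (Sum.inr i) p))) -
      (∑ i, ∑ j, X (Sum.inr i) * (X (Sum.inl j) *
        pderiv (Sum.inl i) (pderiv (Sum.inr j) p)))) := by
    simp only [← Finset.sum_sub_distrib, ← Finset.sum_add_distrib]
    refine Finset.sum_congr rfl fun i _ => Finset.sum_congr rfl fun j _ => ?_
    rw [u, omega]
    ring
  rw [expand, h1, h2, h1', h2']
  ring

lemma omega_wx {a : ℕ} {p : MvPolynomial (Fin d ⊕ Fin d) K}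
    (h : IsWeightedHomogeneous wx p a) (i j : Fin d) :
    IsWeightedHomogeneous wx (omega i j p) (a - 1) := by
  have key : ∀ i j : Fin d,
      IsWeightedHomogeneous wx (pderiv (Sum.inl i) (pderiv (Sum.inr j) p)) (a - 1) :=
    fun i j => isWeightedHomogeneous_pderiv_sub
      (isWeightedHomogeneous_pderiv_sub h (Sum.inr j)) (Sum.inl i)
  exact (key i j).sub (key j i)

lemma omega_wy {b : ℕ} {p : MvPolynomial (Fin d ⊕ Fin d) K}
    (h : IsWeightedHomogeneous wy p b) (i j : Fin d) :
    IsWeightedHomogeneous wy (omega i j p) (b - 1) := by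
  have key : ∀ i j : Fin d,
      IsWeightedHomogeneous wy (pderiv (Sum.inl i) (pderiv (Sum.inr j) p)) (b - 1) :=
    fun i j => isWeightedHomogeneous_pderiv_sub
      (isWeightedHomogeneous_pderiv_sub h (Sum.inr j)) (Sum.inl i)
  exact (key i j).sub (key j i)

lemma mem_of_wy_zero (S : Subalgebra K (MvPolynomial (Fin d ⊕ Fin d) K))
    (hS : ∀ i, X (Sum.inl i) ∈ S) {p : MvPolynomial (Fin d ⊕ Fin d) K}
    (h : IsWeightedHomogeneous wy p 0) : p ∈ S := by
  rw [p.as_sum]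
  refine S.sum_mem fun m hm => ?_
  have hw := h (mem_support_iff.mp hm)
  rw [monomial_eq]
  refine S.mul_mem (S.algebraMap_mem _) (S.prod_mem fun k hk => S.pow_mem ?_ _)
  rcases k with k | k
  · exact hS k
  · -- a variable `y_k` in the support would contribute a positive amount to the weight
    have := Finsupp.le_weight wy (s := Sum.inr k) (by simp [wy]) m
    have := Finsupp.mem_support_iff.mp hk
    omega

lemma mem_of_bihomogeneous [CharZero K] (S : Subalgebra K (MvPolynomial (Fin d ⊕ Fin d) K))
    (hS : ∀ i, X (Sum.inl i) ∈ S) (hu : ∀ i j, u K i j ∈ S) (b : ℕ) :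
    ∀ (a : ℕ) (p : MvPolynomial (Fin d ⊕ Fin d) K), IsWeightedHomogeneous wx p a →
      IsWeightedHomogeneous wy p b → del K d p = 0 → p ∈ S := by
  induction b with
  | zero => exact fun a p _ hb _ => mem_of_wy_zero S hS hb
  | succ b ih =>
    intro a p ha hb hp
    have hmem : ∑ i, ∑ j, u K i j * omega i j p ∈ S :=
      S.sum_mem fun i _ => S.sum_mem fun j _ => S.mul_mem (hu i j)
        (ih (a - 1) _ (omega_wx ha i j) (omega_wy hb i j) (omega_mem_ker hp i j))
    rw [capelli ha hb hp] at hmem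
    have hc : (2 * (a + 1) * (b + 1) : K) ≠ 0 :=
      mul_ne_zero (mul_ne_zero two_ne_zero (Nat.cast_add_one_ne_zero a))
        (Nat.cast_add_one_ne_zero b)
    have hC : (2 * (a + 1) * ((b + 1 : ℕ) : MvPolynomial (Fin d ⊕ Fin d) K)) * p =
        (2 * (a + 1) * (b + 1) : K) • p := by
      simp only [smul_eq_C_mul, map_mul, map_add, map_natCast, map_ofNat, map_one, Nat.cast_add,
        Nat.cast_one]
    rw [hC] at hmem
    have := S.smul_mem hmem (2 * (a + 1) * (b + 1) : K)⁻¹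
    rwa [smul_smul, inv_mul_cancel₀ hc, one_smul] at this

lemma component_wx_del (a : ℕ) (p : MvPolynomial (Fin d ⊕ Fin d) K) :
    del K d (weightedHomogeneousComponent wx a p) =
      weightedHomogeneousComponent wx (a + 1) (del K d p) := by
  rw [del_apply, del_apply, map_sum]
  refine Finset.sum_congr rfl fun k _ => ?_
  rw [show a + 1 = a + wx (Sum.inl k) from rfl, component_X_mul, component_pderiv]
  rfl

lemma component_wy_del (b : ℕ) (p : MvPolynomial (Fin d ⊕ Fin d) K) :
    del K d (weightedHomogeneousComponent wy (b + 1) p) =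
      weightedHomogeneousComponent wy b (del K d p) := by
  rw [del_apply, del_apply, map_sum]
  refine Finset.sum_congr rfl fun k _ => ?_
  rw [show b + 1 = b + wy (Sum.inr k) from rfl, ← component_pderiv, ← component_X_mul]
  rfl

lemma mem_of_del_eq_zero [CharZero K] (S : Subalgebra K (MvPolynomial (Fin d ⊕ Fin d) K))
    (hS : ∀ i, X (Sum.inl i) ∈ S) (hu : ∀ i j, u K i j ∈ S)
    (p : MvPolynomial (Fin d ⊕ Fin d) K) (hp : del K d p = 0) : p ∈ S := by
  refine mem_of_component_mem (w := wy) S p fun b => ?_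
  have hb := weightedHomogeneousComponent_isWeightedHomogeneous (w := wy) b p
  cases b with
  | zero => exact mem_of_wy_zero S hS hb
  | succ b =>
    refine mem_of_component_mem (w := wx) S _ fun a => ?_
    refine mem_of_bihomogeneous S hS hu (b + 1) a _
      (weightedHomogeneousComponent_isWeightedHomogeneous (w := wx) a _)
      (isWeightedHomogeneous_component hb a) ?_
    rw [component_wx_del, component_wy_del, hp, map_zero, map_zero]

end Nowicki


/-- **The Nowicki conjecture.** Let `K` be a field of characteristic 0, `d ≥ 1`, and let `δ`
be the `K`-derivation of `K[x_1,…,x_d,y_1,…,y_d]` with `δ(x_i) = 0` and `δ(y_i) = x_i`.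
Then the algebra of constants `{p : δ p = 0}` coincides with the `K`-subalgebra generated
by `x_1,…,x_d` and the determinants `u_{ij} = x_i y_j − x_j y_i` for `1 ≤ i < j ≤ d`.
Here the polynomial ring is `MvPolynomial (Fin d ⊕ Fin d) K`, with `x i = X (Sum.inl i)`
and `y i = X (Sum.inr i)`. -/
theorem nowicki_conjecture (K : Type*) [Field K] [CharZero K] (d : ℕ) (hd : 1 ≤ d)
    (x y : Fin d → MvPolynomial (Fin d ⊕ Fin d) K)
    (hx : ∀ i, x i = MvPolynomial.X (Sum.inl i))
    (hy : ∀ i, y i = MvPolynomial.X (Sum.inr i))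
    (δ : Derivation K (MvPolynomial (Fin d ⊕ Fin d) K) (MvPolynomial (Fin d ⊕ Fin d) K))
    (hδx : ∀ i, δ (x i) = 0) (hδy : ∀ i, δ (y i) = x i) :
    {p : MvPolynomial (Fin d ⊕ Fin d) K | δ p = 0} =
      (Algebra.adjoin K
        (Set.range x ∪
          {u | ∃ i j : Fin d, i < j ∧ u = x i * y j - x j * y i}) :
        Set (MvPolynomial (Fin d ⊕ Fin d) K)) := by
  obtain rfl : δ = Nowicki.del K d := by
    apply MvPolynomial.derivation_ext
    rintro (i | i)
    · rw [Nowicki.del_inl, ← hx, hδx]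
    · rw [Nowicki.del_inr, ← hx, ← hy, hδy]
  ext p
  simp only [Set.mem_ofPred_eq, SetLike.mem_coe]
  constructor
  · intro hp
    have hxm : ∀ i, x i ∈ Algebra.adjoin K
        (Set.range x ∪ {u | ∃ i j : Fin d, i < j ∧ u = x i * y j - x j * y i}) :=
      fun i => Algebra.subset_adjoin (Or.inl ⟨i, rfl⟩)
    have hum : ∀ i j : Fin d, i < j → x i * y j - x j * y i ∈ Algebra.adjoin K
        (Set.range x ∪ {u | ∃ i j : Fin d, i < j ∧ u = x i * y j - x j * y i}) :=
      fun i j hij => Algebra.subset_adjoin (Or.inr ⟨i, j, hij, rfl⟩)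
    refine Nowicki.mem_of_del_eq_zero _ (fun i => hx i ▸ hxm i) (fun i j => ?_) p hp
    rw [Nowicki.u, ← hx, ← hx, ← hy, ← hy]
    rcases lt_trichotomy i j with h | rfl | h
    · exact hum i j h
    · rw [sub_self]
      exact Subalgebra.zero_mem _
    · rw [← neg_sub]
      exact Subalgebra.neg_mem _ (hum j i h)
  · intro hp
    induction hp using Algebra.adjoin_induction with
    | mem q hq =>
      rcases hq with ⟨i, rfl⟩ | ⟨i, j, -, rfl⟩
      · exact hδx i
      · simp only [map_sub, Derivation.leibniz, hδx, hδy, smul_eq_mul]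
        ring
    | algebraMap r => exact Derivation.map_algebraMap _ r
    | add q r _ _ hq hr => rw [map_add, hq, hr, add_zero]
    | mul q r _ _ hq hr => rw [Derivation.leibniz, hq, hr, smul_zero, smul_zero, add_zero]
end

section
/- Let K be a field of characteristic 0, let d ≥ 1, and let δ be the K-algebra derivation of K[x_1,…,x_d,y_1,…,y_d] determined by δ(x_i) = 0 and δ(y_i) = x_i. For n = (n_1,…,n_d) ∈ ℕ^d let K[X_d,Y_d]^{(n)} be the K-linear span of monomials whose combined degree in {x_i, y_i} equals n_i for each i. Then for every n, the vector space K[X_d,Y_d]^{(n)} ∩ ker δ is spanned over K by the products x_1^{p_1}⋯x_d^{p_d} · ∏_{1≤i<j≤d} (x_i·y_j − x_j·y_i)^{q_{ij}} that lie in K[X_d,Y_d]^{(n)}, i.e. those with p_k + Σ_{j>k} q_{kj} + Σ_{i<k} q_{ik} = n_k for each k. -/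
/-!
Refine the multihomogeneous component by the total degree `b` in the variables `y`; `δ` lowers `b`
by one, so each refined component of a constant is again a constant and it suffices to treat `f` of
multidegree `n` and `y`-degree `b` with `δ f = 0` (`mem_gens`).

*Weights.* With the derivation `E : x_i ↦ y_i, y_i ↦ 0`, the pair `(δ, E)` generates `sl₂`, and
`[δ, E]` acts on the `(n, b)`-component as the scalar `|n| - 2b`. As `E` is nilpotent there,
a nonzero constant satisfies `2b ≤ |n|` (`eq_zero_of_lower`).

*Induction on `|n|`.* Choose `N` with `a = n_N > 0`, and let `ψ` be the specialization `x_N ↦ 0`,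
`y_N ↦ 1`. It commutes with `δ`, so `ψ f` is a constant of multidegree `n - a e_N` and `y`-degree
`b - a`; by induction it is a combination of products `x^p u^q`, in which
`|p| = (|n| - a) - 2 (b - a) ≥ a`. Replacing `a` of the factors `x_k` by `u_{kN}`, which does not
change the image under `ψ`, lifts each of these products to one of multidegree `n` (`lift_gens`).
If `G` is the resulting combination, then `ψ (f - G) = 0`, which for an element of multidegree `n`
means `f - G = x_N r` (`exists_decomp`). Here `r` is a constant of smaller multidegree, and the
induction hypothesis applies to it.

Products of the generators are handled through an inductive predicate `IsGen`, and monomials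
through `IsMono`, so that most verifications are structural inductions.
-/

namespace Nowicki

open MvPolynomial

variable {K : Type*} [Field K] {d : ℕ}

/-- `IsMono K n b p`: `p` is a monomial (with coefficient `1`) of multidegree `n` and of total
degree `b` in the variables `y`. The degree `b` is an integer, so that it can be lowered freely. -/
inductive IsMono (K : Type*) [Field K] {d : ℕ} :
    (Fin d → ℕ) → ℤ → MvPolynomial (Fin d ⊕ Fin d) K → Prop
  | one : IsMono K 0 0 1
  | mulX {n b p} (k : Fin d) : IsMono K n b p → IsMono K (n + Pi.single k 1) b (X (Sum.inl k) * p)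
  | mulY {n b p} (k : Fin d) :
      IsMono K n b p → IsMono K (n + Pi.single k 1) (b + 1) (X (Sum.inr k) * p)

/-- The span of the monomials of multidegree `n` and total `y`-degree `b`. -/
noncomputable def comp (K : Type*) [Field K] {d : ℕ} (n : Fin d → ℕ) (b : ℤ) :
    Submodule K (MvPolynomial (Fin d ⊕ Fin d) K) :=
  Submodule.span K {p | IsMono K n b p}

/-- The determinant `u_{ij} = x_i y_j - x_j y_i`. -/
noncomputable def det (K : Type*) [Field K] {d : ℕ} (i j : Fin d) :
    MvPolynomial (Fin d ⊕ Fin d) K :=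
  X (Sum.inl i) * X (Sum.inr j) - X (Sum.inl j) * X (Sum.inr i)

/-- `IsGen K n b p`: `p` is a product of variables `x_k` and of determinants `u_{ij}`, of
multidegree `n` and with `b` determinant factors. No order is imposed on the indices `i`, `j`. -/
inductive IsGen (K : Type*) [Field K] {d : ℕ} :
    (Fin d → ℕ) → ℤ → MvPolynomial (Fin d ⊕ Fin d) K → Prop
  | one : IsGen K 0 0 1
  | mulX {n b p} (k : Fin d) : IsGen K n b p → IsGen K (n + Pi.single k 1) b (X (Sum.inl k) * p)
  | mulDet {n b p} (i j : Fin d) : IsGen K n b p →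
      IsGen K (n + Pi.single i 1 + Pi.single j 1) (b + 1) (det K i j * p)

/-- The span of the products of multidegree `n` with `b` determinant factors. -/
noncomputable def gens (K : Type*) [Field K] {d : ℕ} (n : Fin d → ℕ) (b : ℤ) :
    Submodule K (MvPolynomial (Fin d ⊕ Fin d) K) :=
  Submodule.span K {p | IsGen K n b p}

/-- The derivation `δ : x_i ↦ 0, y_i ↦ x_i`. -/
noncomputable def lower (K : Type*) [Field K] (d : ℕ) :
    Derivation K (MvPolynomial (Fin d ⊕ Fin d) K) (MvPolynomial (Fin d ⊕ Fin d) K) :=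
  mkDerivation K (Sum.elim (fun _ => 0) (fun i => X (Sum.inl i)))

/-- The opposite derivation `x_i ↦ y_i, y_i ↦ 0`, which spans an `sl₂` together with `lower` and
their commutator. -/
noncomputable def raise (K : Type*) [Field K] (d : ℕ) :
    Derivation K (MvPolynomial (Fin d ⊕ Fin d) K) (MvPolynomial (Fin d ⊕ Fin d) K) :=
  mkDerivation K (Sum.elim (fun i => X (Sum.inr i)) (fun _ => 0))

@[simp] lemma lower_X_inl (i : Fin d) : lower K d (X (Sum.inl i)) = 0 := by simp [lower]
@[simp] lemma lower_X_inr (i : Fin d) : lower K d (X (Sum.inr i)) = X (Sum.inl i) := by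
  simp [lower]
@[simp] lemma raise_X_inl (i : Fin d) : raise K d (X (Sum.inl i)) = X (Sum.inr i) := by
  simp [raise]
@[simp] lemma raise_X_inr (i : Fin d) : raise K d (X (Sum.inr i)) = 0 := by simp [raise]

/-- The specialization `x_N ↦ 0, y_N ↦ 1`, fixing all other variables. -/
noncomputable def spec (K : Type*) [Field K] {d : ℕ} (N : Fin d) :
    MvPolynomial (Fin d ⊕ Fin d) K →ₐ[K] MvPolynomial (Fin d ⊕ Fin d) K :=
  aeval (Sum.elim (fun k => if k = N then 0 else X (Sum.inl k))
    (fun k => if k = N then 1 else X (Sum.inr k)))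

@[simp] lemma spec_X_inl (N k : Fin d) :
    spec K N (X (Sum.inl k)) = if k = N then 0 else X (Sum.inl k) := by simp [spec]
@[simp] lemma spec_X_inr (N k : Fin d) :
    spec K N (X (Sum.inr k)) = if k = N then 1 else X (Sum.inr k) := by simp [spec]

/-! ### Bihomogeneous components and the `sl₂`-action -/

lemma IsMono.mem {n : Fin d → ℕ} {b : ℤ} {p : MvPolynomial (Fin d ⊕ Fin d) K}
    (h : IsMono K n b p) : p ∈ comp K n b := Submodule.subset_span h

lemma IsGen.mem {n : Fin d → ℕ} {b : ℤ} {p : MvPolynomial (Fin d ⊕ Fin d) K}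
    (h : IsGen K n b p) : p ∈ gens K n b := Submodule.subset_span h

/-- A linear map sends a span into a submodule as soon as it does so on the generators. -/
lemma map_mem_of_span {M M' : Type*} [AddCommGroup M] [Module K M] [AddCommGroup M'] [Module K M']
    {S : Set M} {T : Submodule K M'} (φ : M →ₗ[K] M') (h : ∀ p ∈ S, φ p ∈ T)
    {f : M} (hf : f ∈ Submodule.span K S) : φ f ∈ T :=
  (Submodule.span_le (p := T.comap φ)).2 h hf

lemma X_inl_mul_mem_comp (k : Fin d) {n : Fin d → ℕ} {b : ℤ} {f : MvPolynomial (Fin d ⊕ Fin d) K}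
    (hf : f ∈ comp K n b) : X (Sum.inl k) * f ∈ comp K (n + Pi.single k 1) b :=
  map_mem_of_span (LinearMap.mulLeft K (X (Sum.inl k))) (fun _ hp => (IsMono.mulX k hp).mem) hf

lemma X_inr_mul_mem_comp (k : Fin d) {n : Fin d → ℕ} {b : ℤ} {f : MvPolynomial (Fin d ⊕ Fin d) K}
    (hf : f ∈ comp K n b) : X (Sum.inr k) * f ∈ comp K (n + Pi.single k 1) (b + 1) :=
  map_mem_of_span (LinearMap.mulLeft K (X (Sum.inr k))) (fun _ hp => (IsMono.mulY k hp).mem) hf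

lemma X_inl_mul_mem_gens (k : Fin d) {n : Fin d → ℕ} {b : ℤ} {f : MvPolynomial (Fin d ⊕ Fin d) K}
    (hf : f ∈ gens K n b) : X (Sum.inl k) * f ∈ gens K (n + Pi.single k 1) b :=
  map_mem_of_span (LinearMap.mulLeft K (X (Sum.inl k))) (fun _ hp => (IsGen.mulX k hp).mem) hf

lemma IsMono.le_sum {n : Fin d → ℕ} {b : ℤ} {p : MvPolynomial (Fin d ⊕ Fin d) K}
    (h : IsMono K n b p) : b ≤ ∑ k, (n k : ℤ) := by
  induction h with
  | one => simp
  | mulX k _ ih =>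
    simp only [Pi.add_apply, Nat.cast_add, Finset.sum_add_distrib]
    have : (0 : ℤ) ≤ ∑ x, ((Pi.single k 1 : Fin d → ℕ) x : ℤ) := Finset.sum_nonneg (by simp)
    linarith
  | mulY k _ ih =>
    simp only [Pi.add_apply, Nat.cast_add, Finset.sum_add_distrib]
    have : ∑ x, ((Pi.single k 1 : Fin d → ℕ) x : ℤ) = 1 := by simp [Pi.single_apply]
    linarith

lemma comp_eq_bot {n : Fin d → ℕ} {b : ℤ} (h : ∑ k, (n k : ℤ) < b) : comp K n b = ⊥ := by
  rw [comp, Submodule.span_eq_bot]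
  intro p hp
  exact absurd (IsMono.le_sum hp) (not_le.2 h)

lemma raise_mem {n : Fin d → ℕ} {b : ℤ} {f : MvPolynomial (Fin d ⊕ Fin d) K}
    (hf : f ∈ comp K n b) : raise K d f ∈ comp K n (b + 1) := by
  refine map_mem_of_span (raise K d).toLinearMap (fun p hp => ?_) hf
  change raise K d p ∈ _
  clear hf
  induction hp with
  | one => simp
  | mulX k hp ih =>
    rw [Derivation.leibniz, raise_X_inl, smul_eq_mul, smul_eq_mul, mul_comm _ (X (Sum.inr k))]
    exact add_mem (X_inl_mul_mem_comp k ih) (X_inr_mul_mem_comp k hp.mem)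
  | mulY k hp ih =>
    rw [Derivation.leibniz, raise_X_inr, smul_zero, add_zero, smul_eq_mul]
    exact X_inr_mul_mem_comp k ih

lemma lower_mem {n : Fin d → ℕ} {b : ℤ} {f : MvPolynomial (Fin d ⊕ Fin d) K}
    (hf : f ∈ comp K n b) : lower K d f ∈ comp K n (b - 1) := by
  refine map_mem_of_span (lower K d).toLinearMap (fun p hp => ?_) hf
  change lower K d p ∈ _
  clear hf
  induction hp with
  | one => simp
  | mulX k hp ih =>
    rw [Derivation.leibniz, lower_X_inl, smul_zero, add_zero, smul_eq_mul]
    exact X_inl_mul_mem_comp k ih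
  | @mulY n b p k hp ih =>
    rw [Derivation.leibniz, lower_X_inr, smul_eq_mul, smul_eq_mul, mul_comm _ (X (Sum.inl k))]
    refine add_mem ?_ ?_
    · have := X_inr_mul_mem_comp k ih
      rwa [sub_add_cancel, ← add_sub_cancel_right b 1] at this
    · rw [add_sub_cancel_right]
      exact X_inl_mul_mem_comp k hp.mem

/-- The commutator of `lower` and `raise` acts on the `(n, b)`-component as the scalar
`|n| - 2b`. -/
lemma lower_raise {n : Fin d → ℕ} {b : ℤ} {f : MvPolynomial (Fin d ⊕ Fin d) K}
    (hf : f ∈ comp K n b) :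
    lower K d (raise K d f) = raise K d (lower K d f) + (∑ k, (n k : ℤ) - 2 * b) • f := by
  have key : ∀ p, IsMono K n b p → ⁅lower K d, raise K d⁆ p = (∑ k, (n k : ℤ) - 2 * b) • p := by
    intro p hp
    clear hf
    induction hp with
    | one => simp
    | @mulX n b p k hp ih =>
      have h1 : ∑ x, ((Pi.single k 1 : Fin d → ℕ) x : ℤ) = 1 := by simp [Pi.single_apply]
      have h2 : ⁅lower K d, raise K d⁆ (X (Sum.inl k)) = X (Sum.inl k) := by
        simp [Derivation.commutator_apply]
      rw [Derivation.leibniz, ih, h2]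
      simp only [Pi.add_apply, Nat.cast_add, Finset.sum_add_distrib, h1, smul_eq_mul,
        zsmul_eq_mul]
      push_cast
      ring
    | @mulY n b p k hp ih =>
      have h1 : ∑ x, ((Pi.single k 1 : Fin d → ℕ) x : ℤ) = 1 := by simp [Pi.single_apply]
      have h2 : ⁅lower K d, raise K d⁆ (X (Sum.inr k)) = - X (Sum.inr k) := by
        simp [Derivation.commutator_apply]
      rw [Derivation.leibniz, ih, h2]
      simp only [Pi.add_apply, Nat.cast_add, Finset.sum_add_distrib, h1, smul_eq_mul,
        zsmul_eq_mul]
      push_cast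
      ring
  have : ⁅lower K d, raise K d⁆ f = (∑ k, (n k : ℤ) - 2 * b) • f := by
    induction hf using Submodule.span_induction with
    | mem p hp => exact key p hp
    | zero => simp
    | add p q _ _ hp hq => rw [map_add, hp, hq, smul_add]
    | smul c p _ hp => rw [Derivation.map_smul, hp, smul_comm]
  rw [Derivation.commutator_apply] at this
  rw [← this]; ring

/-- Allowing an eigenvector of `raise ∘ lower` with eigenvalue `c ≤ 0`, rather than an element of
the kernel of `lower`, makes the induction on `|n| - b` work: `raise f` is again an eigenvector,
with eigenvalue `c + |n| - 2b < 0`. -/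
lemma eq_zero_aux [CharZero K] (t : ℕ) : ∀ {n : Fin d → ℕ} {b c : ℤ}
    {f : MvPolynomial (Fin d ⊕ Fin d) K}, f ∈ comp K n b → ∑ k, (n k : ℤ) < b + t →
    ∑ k, (n k : ℤ) < 2 * b → c ≤ 0 → raise K d (lower K d f) = c • f → f = 0 := by
  induction t with
  | zero =>
    intro n b c f hf ht _ _ _
    rw [comp_eq_bot (by simpa using ht)] at hf
    simpa using hf
  | succ t ih =>
    intro n b c f hf ht hb hc h
    have h1 := lower_raise hf
    rw [h, ← add_smul] at h1
    have h2 : raise K d f = 0 := by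
      refine ih (c := c + (∑ k, (n k : ℤ) - 2 * b)) (raise_mem hf) (by push_cast at ht; linarith)
        (by linarith) (by linarith) ?_
      rw [h1, map_zsmul]
    rw [h2, map_zero] at h1
    rcases smul_eq_zero.1 h1.symm with h3 | h3
    · linarith
    · exact h3

/-- A constant of `y`-degree larger than half of its total degree vanishes. -/
lemma eq_zero_of_lower [CharZero K] {n : Fin d → ℕ} {b : ℤ} {f : MvPolynomial (Fin d ⊕ Fin d) K}
    (hf : f ∈ comp K n b) (h : lower K d f = 0) (hb : ∑ k, (n k : ℤ) < 2 * b) : f = 0 := by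
  refine eq_zero_aux (∑ k, (n k : ℤ) - b + 1).toNat (c := 0) hf ?_ hb le_rfl (by simp [h])
  have := Int.self_le_toNat (∑ k, (n k : ℤ) - b + 1)
  linarith

/-! ### The specialization `x_N ↦ 0, y_N ↦ 1` -/

lemma lower_spec (N : Fin d) (f : MvPolynomial (Fin d ⊕ Fin d) K) :
    lower K d (spec K N f) = spec K N (lower K d f) := by
  induction f using MvPolynomial.induction_on with
  | C a => simp [← algebraMap_eq]
  | add p q hp hq => simp [hp, hq]
  | mul_X p i hp =>
    rw [map_mul, Derivation.leibniz, Derivation.leibniz, hp]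
    rcases i with k | k <;> by_cases hk : k = N <;> simp [hk]

lemma spec_spec (N : Fin d) (f : MvPolynomial (Fin d ⊕ Fin d) K) :
    spec K N (spec K N f) = spec K N f := by
  induction f using MvPolynomial.induction_on with
  | C a => simp [← algebraMap_eq]
  | add p q hp hq => simp [hp, hq]
  | mul_X p i hp =>
    rw [map_mul, map_mul, hp]
    rcases i with k | k <;> by_cases hk : k = N <;> simp [hk]

lemma update_add_single_self (n : Fin d → ℕ) (N : Fin d) (a : ℕ) :
    Function.update (n + Pi.single N a) N 0 = Function.update n N 0 := by
  ext k; by_cases h : k = N <;> simp [h]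

lemma update_add_single_ne (n : Fin d → ℕ) {N k : Fin d} (h : k ≠ N) (a : ℕ) :
    Function.update (n + Pi.single k a) N 0 = Function.update n N 0 + Pi.single k a := by
  ext l
  by_cases h' : l = N
  · subst h'; simp [h.symm]
  · simp [h']

lemma spec_mem (N : Fin d) {n : Fin d → ℕ} {b : ℤ} {f : MvPolynomial (Fin d ⊕ Fin d) K}
    (hf : f ∈ comp K n b) : spec K N f ∈ comp K (Function.update n N 0) (b - n N) := by
  refine map_mem_of_span (spec K N).toLinearMap (fun p hp => ?_) hf
  rw [AlgHom.toLinearMap_apply]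
  clear hf
  induction hp with
  | one =>
    have h0 : Function.update (0 : Fin d → ℕ) N 0 = 0 := by simp
    rw [h0]
    simpa using (IsMono.one (K := K) (d := d)).mem
  | mulX k hp ih =>
    by_cases h : k = N
    · simp [h]
    · rw [map_mul, spec_X_inl, if_neg h, update_add_single_ne _ h]
      simpa [Ne.symm h] using X_inl_mul_mem_comp k ih
  | @mulY n b p k hp ih =>
    by_cases h : k = N
    · subst h
      rw [map_mul, spec_X_inr, if_pos rfl, one_mul, update_add_single_self]
      convert ih using 1
      simp
    · rw [map_mul, spec_X_inr, if_neg h, update_add_single_ne _ h]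
      have e : b + 1 - ((n + Pi.single k 1 : Fin d → ℕ) N : ℤ) = b - n N + 1 := by
        simp [Ne.symm h]; ring
      rw [e]
      exact X_inr_mul_mem_comp k ih

/-- Modulo `x_N`, an element of multidegree `n + e_N` is recovered from its specialization; the
remaining multiple of `x_N` has a homogeneous cofactor. -/
lemma exists_decomp (N : Fin d) {n : Fin d → ℕ} {b : ℤ} {f : MvPolynomial (Fin d ⊕ Fin d) K}
    (hf : f ∈ comp K (n + Pi.single N 1) b) : ∃ r ∈ comp K n b,
      f = X (Sum.inr N) ^ (n N + 1) * spec K N f + X (Sum.inl N) * r := by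
  have key : ∀ {m : Fin d → ℕ} {p : MvPolynomial (Fin d ⊕ Fin d) K}, IsMono K m b p →
      p = X (Sum.inr N) ^ m N * spec K N p ∨ ∃ n r, m = n + Pi.single N 1 ∧ IsMono K n b r ∧
        spec K N p = 0 ∧ p = X (Sum.inl N) * r := by
    intro m p hp
    clear hf
    induction hp with
    | one => left; simp
    | @mulX n b p k hp ih =>
      by_cases h : k = N
      · subst h
        exact Or.inr ⟨n, p, rfl, hp, by simp, rfl⟩
      · rcases ih with ih | ⟨n', r, rfl, hr, h0, rfl⟩
        · left
          conv_lhs => rw [ih]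
          simp [h, Ne.symm h]; ring
        · exact Or.inr ⟨n' + Pi.single k 1, X (Sum.inl k) * r, by abel, hr.mulX k,
            by rw [map_mul, h0, mul_zero], by ring⟩
    | @mulY n b p k hp ih =>
      rcases ih with ih | ⟨n', r, rfl, hr, h0, rfl⟩
      · left
        conv_lhs => rw [ih]
        by_cases h : k = N
        · subst h; simp; ring
        · simp [h, Ne.symm h]; ring
      · exact Or.inr ⟨n' + Pi.single k 1, X (Sum.inr k) * r, by abel, hr.mulY k,
            by rw [map_mul, h0, mul_zero], by ring⟩
  induction hf using Submodule.span_induction with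
  | mem p hp =>
    rcases key hp with h | ⟨n', r, hn, hr, h0, h⟩
    · exact ⟨0, zero_mem _, by simpa using h⟩
    · rw [add_left_inj] at hn
      subst hn
      exact ⟨r, hr.mem, by rw [h0, mul_zero, zero_add, h]⟩
  | zero => exact ⟨0, zero_mem _, by simp⟩
  | add p q _ _ hp hq =>
    obtain ⟨r, hr, h⟩ := hp
    obtain ⟨s, hs, h'⟩ := hq
    refine ⟨r + s, add_mem hr hs, ?_⟩
    conv_lhs => rw [h, h']
    rw [map_add]; ring
  | smul c p _ hp =>
    obtain ⟨r, hr, h⟩ := hp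
    refine ⟨c • r, Submodule.smul_mem _ _ hr, ?_⟩
    conv_lhs => rw [h]
    rw [map_smul, smul_add, mul_smul_comm, mul_smul_comm]

/-! ### Products of the generators, and the induction -/

lemma det_mul_mem_comp (i j : Fin d) {n : Fin d → ℕ} {b : ℤ} {f : MvPolynomial (Fin d ⊕ Fin d) K}
    (hf : f ∈ comp K n b) :
    det K i j * f ∈ comp K (n + Pi.single i 1 + Pi.single j 1) (b + 1) := by
  rw [det, sub_mul, mul_assoc, mul_assoc]
  refine sub_mem ?_ (X_inl_mul_mem_comp j (X_inr_mul_mem_comp i hf))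
  rw [add_right_comm]
  exact X_inl_mul_mem_comp i (X_inr_mul_mem_comp j hf)

lemma gens_le_comp (n : Fin d → ℕ) (b : ℤ) : gens K n b ≤ comp K n b := by
  refine Submodule.span_le.2 fun p hp => ?_
  change p ∈ comp K n b
  induction hp with
  | one => exact IsMono.one.mem
  | mulX k hp ih => exact X_inl_mul_mem_comp k ih
  | mulDet i j hp ih => exact det_mul_mem_comp i j ih

lemma IsGen.lower_eq_zero {n : Fin d → ℕ} {b : ℤ} {p : MvPolynomial (Fin d ⊕ Fin d) K}
    (h : IsGen K n b p) : lower K d p = 0 := by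
  induction h with
  | one => simp
  | mulX k hp ih => simp [ih]
  | mulDet i j hp ih => simp [ih, det]; ring_nf; simp

lemma lower_eq_zero_of_mem_gens {n : Fin d → ℕ} {b : ℤ} {f : MvPolynomial (Fin d ⊕ Fin d) K}
    (hf : f ∈ gens K n b) : lower K d f = 0 :=
  (Submodule.mem_bot K).1 <| map_mem_of_span (T := ⊥) (lower K d).toLinearMap
    (fun _ hp => (Submodule.mem_bot K).2 (IsGen.lower_eq_zero hp)) hf

/-- A product with at least `a` factors `x_k` (the hypothesis on `a`, since there are `|n| - 2b` of
them) has the same specialization as a product in which `a` of these factors `x_k` are replaced by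
`u_{kN}`. -/
lemma IsGen.lift (N : Fin d) {n : Fin d → ℕ} {b : ℤ} {p : MvPolynomial (Fin d ⊕ Fin d) K}
    (h : IsGen K n b p) : ∀ a : ℕ, a + 2 * b ≤ ∑ k, (n k : ℤ) →
      ∃ G, IsGen K (n + Pi.single N a) (b + a) G ∧ spec K N G = spec K N p := by
  have h1 (k : Fin d) : ∑ x, ((Pi.single k 1 : Fin d → ℕ) x : ℤ) = 1 := by simp [Pi.single_apply]
  induction h with
  | one =>
    intro a ha
    obtain rfl : a = 0 := by simpa using ha
    exact ⟨1, by simpa using IsGen.one, rfl⟩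
  | @mulX n b p k hp ih =>
    intro a ha
    simp only [Pi.add_apply, Nat.cast_add, Finset.sum_add_distrib, h1] at ha
    rcases a with _ | a
    · exact ⟨_, by simpa using hp.mulX k, rfl⟩
    · obtain ⟨G, hG, hs⟩ := ih a (by push_cast at ha; linarith)
      refine ⟨det K k N * G, ?_, ?_⟩
      · convert hG.mulDet k N using 1
        · rw [Pi.single_add]; abel
        · push_cast; ring
      · simp [det, hs]
  | @mulDet n b p i j hp ih =>
    intro a ha
    simp only [Pi.add_apply, Nat.cast_add, Finset.sum_add_distrib, h1] at ha
    obtain ⟨G, hG, hs⟩ := ih a (by linarith)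
    refine ⟨det K i j * G, ?_, by rw [map_mul, map_mul, hs]⟩
    convert hG.mulDet i j using 1
    · abel
    · ring

lemma lift_gens (N : Fin d) {n : Fin d → ℕ} {b : ℤ} {a : ℕ} (ha : a + 2 * b ≤ ∑ k, (n k : ℤ))
    {f : MvPolynomial (Fin d ⊕ Fin d) K} (hf : f ∈ gens K n b) :
    ∃ G ∈ gens K (n + Pi.single N a) (b + a), spec K N G = spec K N f := by
  have : spec K N f ∈ (gens K (n + Pi.single N a) (b + a)).map (spec K N).toLinearMap := by
    refine map_mem_of_span (spec K N).toLinearMap (fun p hp => ?_) hf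
    obtain ⟨G, hG, h⟩ := IsGen.lift N hp a ha
    exact ⟨G, hG.mem, h⟩
  simpa using this

/-- Bihomogeneous constants are spanned by products of the `x_k` and the `u_{ij}`. -/
theorem mem_gens [CharZero K] (t : ℕ) : ∀ {n : Fin d → ℕ} {b : ℤ}
    {f : MvPolynomial (Fin d ⊕ Fin d) K}, ∑ k, n k = t → f ∈ comp K n b → lower K d f = 0 →
    f ∈ gens K n b := by
  induction t using Nat.strong_induction_on with
  | _ t ih =>
  intro n b f ht hf hδ
  by_cases hn : n = 0
  · subst hn
    refine (Submodule.span_mono fun p hp => ?_ : comp K (0 : Fin d → ℕ) b ≤ gens K 0 b) hf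
    simp only [Set.mem_ofPred_eq] at hp ⊢
    generalize hm : (0 : Fin d → ℕ) = m at hp
    cases hp with
    | one => exact IsGen.one
    | mulX k _ => simpa using congrFun hm k
    | mulY k _ => simpa using congrFun hm k
  · obtain ⟨N, hN⟩ : ∃ N, n N ≠ 0 := Function.ne_iff.1 hn
    obtain ⟨m, rfl⟩ : ∃ m : Fin d → ℕ, n = m + Pi.single N 1 := by
      refine ⟨n - Pi.single N 1, ?_⟩
      ext k
      simp only [Pi.add_apply, Pi.sub_apply, Pi.single_apply]
      split_ifs with h
      · subst h; omega
      · omega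
    by_cases hb : ∑ k, ((m + Pi.single N 1 : Fin d → ℕ) k : ℤ) < 2 * b
    · rw [eq_zero_of_lower hf hδ hb]; exact zero_mem _
    set n := m + Pi.single N 1 with hndef
    have hupd : Function.update n N 0 + Pi.single N (n N) = n := by
      ext k; by_cases h : k = N
      · subst h; simp
      · simp [h]
    have hsum : ∑ k, Function.update n N 0 k + n N = ∑ k, n k := by
      conv_rhs => rw [← hupd]
      simp only [Pi.add_apply, Finset.sum_add_distrib]
      simp
    have hg : spec K N f ∈ gens K (Function.update n N 0) (b - n N) :=
      ih _ (by omega) rfl (spec_mem N hf) (by rw [lower_spec, hδ, map_zero])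
    obtain ⟨G, hG, hGs⟩ := lift_gens N (a := n N) (by zify at hsum; linarith) hg
    rw [hupd, sub_add_cancel] at hG
    rw [spec_spec] at hGs
    have hfG : f - G ∈ comp K (m + Pi.single N 1) b := sub_mem hf (gens_le_comp _ _ hG)
    obtain ⟨r, hr, hfr⟩ := exists_decomp N hfG
    rw [map_sub, hGs, sub_self, mul_zero, zero_add] at hfr
    have hδr : lower K d r = 0 := by
      have := congrArg (lower K d) hfr
      rw [map_sub, hδ, lower_eq_zero_of_mem_gens hG, Derivation.leibniz, lower_X_inl] at this
      simpa using this
    have hrg := ih (∑ k, m k) (by rw [← ht, hndef]; simp [Finset.sum_add_distrib]) rfl hr hδr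
    rw [sub_eq_iff_eq_add.1 hfr]
    exact add_mem (X_inl_mul_mem_gens N hrg) hG


/-! ### Splitting a multihomogeneous component by `y`-degree -/

lemma IsMono.exists_monomial {n : Fin d → ℕ} {b : ℤ} {p : MvPolynomial (Fin d ⊕ Fin d) K}
    (h : IsMono K n b p) : ∃ m : (Fin d ⊕ Fin d) →₀ ℕ,
      (∀ k : Fin d, m (Sum.inl k) + m (Sum.inr k) = n k) ∧ p = monomial m (1 : K) := by
  induction h with
  | one => exact ⟨0, by simp, rfl⟩
  | @mulX n b p k hp ih =>
    obtain ⟨m, hm, rfl⟩ := ih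
    refine ⟨Finsupp.single (Sum.inl k) 1 + m, fun l => ?_, by simp [X, monomial_mul]⟩
    rcases eq_or_ne l k with rfl | h
    · simp [← hm]; ring
    · simp [h, ← hm]
  | @mulY n b p k hp ih =>
    obtain ⟨m, hm, rfl⟩ := ih
    refine ⟨Finsupp.single (Sum.inr k) 1 + m, fun l => ?_, by simp [X, monomial_mul]⟩
    rcases eq_or_ne l k with rfl | h
    · simp [← hm]; ring
    · simp [h, ← hm]

lemma IsMono.mul {n n' : Fin d → ℕ} {b b' : ℤ} {p p' : MvPolynomial (Fin d ⊕ Fin d) K}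
    (h : IsMono K n b p) (h' : IsMono K n' b' p') : IsMono K (n + n') (b + b') (p * p') := by
  induction h with
  | one => simpa using h'
  | mulX k hp ih => rw [add_right_comm, mul_assoc]; exact ih.mulX k
  | mulY k hp ih =>
    convert ih.mulY k using 1
    · abel
    · ring
    · ring

lemma exists_isMono (m : (Fin d ⊕ Fin d) →₀ ℕ) :
    ∃ b, IsMono K (fun k => m (Sum.inl k) + m (Sum.inr k)) b (monomial m (1 : K)) := by
  induction m using Finsupp.induction_linear with
  | zero => exact ⟨0, IsMono.one⟩
  | add f g hf hg =>
    obtain ⟨b, hb⟩ := hf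
    obtain ⟨c, hc⟩ := hg
    refine ⟨b + c, ?_⟩
    convert hb.mul hc using 1
    · ext k; simp; ring
    · simp [monomial_mul]
  | single s a =>
    induction a with
    | zero => exact ⟨0, by simp; exact IsMono.one⟩
    | succ a ih =>
      obtain ⟨b, hb⟩ := ih
      rcases s with k | k
      · refine ⟨b, ?_⟩
        convert hb.mulX k using 1
        · ext l; simp [Finsupp.single_apply, Pi.single_apply, eq_comm]
        · simp [X, monomial_mul, add_comm]
      · refine ⟨b + 1, ?_⟩
        convert hb.mulY k using 1
        · ext l; simp [Finsupp.single_apply, Pi.single_apply, eq_comm]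
        · simp [X, monomial_mul, add_comm]

lemma span_monomial_eq_iSup (n : Fin d → ℕ) :
    Submodule.span K {p | ∃ m : (Fin d ⊕ Fin d) →₀ ℕ,
      (∀ k : Fin d, m (Sum.inl k) + m (Sum.inr k) = n k) ∧ p = monomial m (1 : K)} =
      ⨆ b, comp K n b := by
  apply le_antisymm
  · refine Submodule.span_le.2 ?_
    rintro _ ⟨m, hm, rfl⟩
    obtain ⟨b, hb⟩ := exists_isMono (K := K) m
    rw [funext hm] at hb
    exact Submodule.mem_iSup_of_mem b hb.mem
  · exact iSup_le fun b => Submodule.span_mono fun p hp => IsMono.exists_monomial hp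

/-- The components of different `y`-degree lie in different eigenspaces of the commutator of `lower`
and `raise`. -/
lemma iSupIndep_comp [CharZero K] (n : Fin d → ℕ) : iSupIndep fun b => comp K n b := by
  let H : Module.End K (MvPolynomial (Fin d ⊕ Fin d) K) := (⁅lower K d, raise K d⁆).toLinearMap
  have h1 := (Module.End.eigenspaces_iSupIndep H).comp
    (f := fun b : ℤ => (((∑ k, (n k : ℤ) - 2 * b : ℤ)) : K)) (by
      intro b c h
      have := Int.cast_injective h
      linarith)
  refine h1.mono fun b f hf => ?_
  rw [Function.comp_apply, Module.End.mem_eigenspace_iff]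
  change ⁅lower K d, raise K d⁆ f = _
  rw [Derivation.commutator_apply, lower_raise hf, add_sub_cancel_left, Int.cast_smul_eq_zsmul]

lemma mem_iSup_gens [CharZero K] (n : Fin d → ℕ) {f : MvPolynomial (Fin d ⊕ Fin d) K}
    (hf : f ∈ ⨆ b, comp K n b) (h : lower K d f = 0) : f ∈ ⨆ b, gens K n b := by
  obtain ⟨F, hF, rfl⟩ := (Submodule.mem_iSup_iff_exists_finsupp _ _).1 hf
  have hind : iSupIndep fun b => comp K n (b - 1) :=
    (iSupIndep_comp (K := K) n).comp (f := fun b : ℤ => b - 1) (sub_left_injective)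
  rw [iSupIndep_iff_finsetSum_eq_zero_imp_eq_zero] at hind
  rw [Finsupp.sum, map_sum] at h
  have h0 := hind F.support (fun b => lower K d (F b)) (fun b _ => lower_mem (hF b)) h
  exact Submodule.sum_mem _ fun b hb =>
    Submodule.mem_iSup_of_mem b (mem_gens _ rfl (hF b) (h0 b hb))

/-! ### Products in exponent form -/

/-- The products `x^p ∏_{i<j} u_{ij}^{q_{ij}}` of multidegree `n`, given by their exponents. -/
def products (K : Type*) [Field K] {d : ℕ} (n : Fin d → ℕ) :
    Set (MvPolynomial (Fin d ⊕ Fin d) K) :=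
  {g | ∃ (p : Fin d → ℕ) (q : Fin d → Fin d → ℕ),
    (∀ k : Fin d, p k + (∑ j : Fin d, if k < j then q k j else 0)
      + (∑ i : Fin d, if i < k then q i k else 0) = n k) ∧
    g = (∏ k : Fin d, X (Sum.inl k) ^ p k) *
      ∏ i : Fin d, ∏ j : Fin d, if i < j then det K i j ^ q i j else 1}

lemma one_mem_products : (1 : MvPolynomial (Fin d ⊕ Fin d) K) ∈ products K (0 : Fin d → ℕ) :=
  ⟨0, 0, by simp, by simp⟩

lemma mul_mem_products {n n' : Fin d → ℕ} {g g' : MvPolynomial (Fin d ⊕ Fin d) K}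
    (h : g ∈ products K n) (h' : g' ∈ products K n') : g * g' ∈ products K (n + n') := by
  obtain ⟨p, q, hn, rfl⟩ := h
  obtain ⟨p', q', hn', rfl⟩ := h'
  refine ⟨p + p', q + q', fun k => ?_, ?_⟩
  · have e1 : (∑ j, if k < j then (q + q') k j else 0) =
        (∑ j, if k < j then q k j else 0) + ∑ j, if k < j then q' k j else 0 := by
      rw [← Finset.sum_add_distrib]
      exact Finset.sum_congr rfl fun j _ => by split_ifs <;> simp
    have e2 : (∑ i, if i < k then (q + q') i k else 0) =
        (∑ i, if i < k then q i k else 0) + ∑ i, if i < k then q' i k else 0 := by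
      rw [← Finset.sum_add_distrib]
      exact Finset.sum_congr rfl fun j _ => by split_ifs <;> simp
    rw [e1, e2, Pi.add_apply, Pi.add_apply, ← hn, ← hn']
    ring
  · rw [mul_mul_mul_comm, ← Finset.prod_mul_distrib, ← Finset.prod_mul_distrib]
    congr 1
    · exact Finset.prod_congr rfl fun k _ => by rw [Pi.add_apply, pow_add]
    · refine Finset.prod_congr rfl fun i _ => ?_
      rw [← Finset.prod_mul_distrib]
      refine Finset.prod_congr rfl fun j _ => ?_
      split_ifs
      · rw [Pi.add_apply, Pi.add_apply, pow_add]
      · simp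

lemma X_mem_products (k : Fin d) : X (Sum.inl k) ∈ products K (Pi.single k 1) := by
  refine ⟨Pi.single k 1, 0, by simp, ?_⟩
  simp [Pi.single_apply, pow_ite, Finset.prod_ite_eq']

lemma det_mem_products {i j : Fin d} (h : i < j) :
    det K i j ∈ products K (Pi.single i 1 + Pi.single j 1) := by
  refine ⟨0, Pi.single i (Pi.single j 1), fun k => ?_, ?_⟩
  · have e1 : (∑ l, if k < l then (Pi.single i (Pi.single j 1) : Fin d → Fin d → ℕ) k l else 0) =
        (Pi.single i 1 : Fin d → ℕ) k := by
      by_cases hk : k = i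
      · subst hk
        rw [Finset.sum_eq_single j] <;> simp +contextual [h]
      · simp [hk]
    have e2 : (∑ l, if l < k then (Pi.single i (Pi.single j 1) : Fin d → Fin d → ℕ) l k else 0) =
        (Pi.single j 1 : Fin d → ℕ) k := by
      rw [Finset.sum_eq_single i]
      · by_cases hk : k = j
        · subst hk; simp [h]
        · simp [hk]
      · intro l _ hl; simp [hl]
      · simp
    rw [e1, e2]; simp
  · have e3 : (∏ l, if i < l then
        det K i l ^ (Pi.single i (Pi.single j 1) : Fin d → Fin d → ℕ) i l else 1) = det K i j := by
      rw [Finset.prod_eq_single j]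
      · simp [h]
      · intro l _ hl; simp [hl]
      · simp
    simp only [Pi.zero_apply, pow_zero, Finset.prod_const_one, one_mul]
    rw [Finset.prod_eq_single i, e3]
    · intro l _ hl; simp [hl]
    · simp

lemma gens_le_span_products (n : Fin d → ℕ) (b : ℤ) :
    gens K n b ≤ Submodule.span K (products K n) := by
  refine Submodule.span_le.2 fun p hp => ?_
  change p ∈ Submodule.span K (products K n)
  have hmul : ∀ {n m : Fin d → ℕ} {g p : MvPolynomial (Fin d ⊕ Fin d) K}, g ∈ products K m →
      p ∈ Submodule.span K (products K n) → g * p ∈ Submodule.span K (products K (n + m)) := by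
    intro n m g p hg hp
    refine map_mem_of_span (LinearMap.mulLeft K g) (fun p hp => Submodule.subset_span ?_) hp
    rw [add_comm]
    exact mul_mem_products hg hp
  induction hp with
  | one => exact Submodule.subset_span one_mem_products
  | mulX k _ ih => exact hmul (X_mem_products k) ih
  | @mulDet n b p i j _ ih =>
    rcases lt_trichotomy i j with h | rfl | h
    · rw [add_assoc]; exact hmul (det_mem_products h) ih
    · simp [det]
    · have hs : det K i j = - det K j i := by simp [det]
      rw [hs, neg_mul, add_assoc, add_comm (Pi.single i 1)]
      exact neg_mem (hmul (det_mem_products h) ih)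

lemma IsGen.mul {n n' : Fin d → ℕ} {b b' : ℤ} {p p' : MvPolynomial (Fin d ⊕ Fin d) K}
    (h : IsGen K n b p) (h' : IsGen K n' b' p') : IsGen K (n + n') (b + b') (p * p') := by
  induction h with
  | one => simpa using h'
  | mulX k hp ih => rw [add_right_comm, mul_assoc]; exact ih.mulX k
  | mulDet i j hp ih =>
    convert ih.mulDet i j using 1
    · abel
    · ring
    · ring

lemma IsGen.pow {n : Fin d → ℕ} {b : ℤ} {p : MvPolynomial (Fin d ⊕ Fin d) K}
    (h : IsGen K n b p) (a : ℕ) : ∃ c, IsGen K (a • n) c (p ^ a) := by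
  induction a with
  | zero => exact ⟨0, by simpa using IsGen.one⟩
  | succ a ih =>
    obtain ⟨c, hc⟩ := ih
    exact ⟨c + b, by rw [succ_nsmul, pow_succ]; exact hc.mul h⟩

lemma IsGen.prod {ι : Type*} (s : Finset ι) (n : ι → Fin d → ℕ)
    (p : ι → MvPolynomial (Fin d ⊕ Fin d) K) (h : ∀ i ∈ s, ∃ b, IsGen K (n i) b (p i)) :
    ∃ b, IsGen K (∑ i ∈ s, n i) b (∏ i ∈ s, p i) := by
  classical
  induction s using Finset.induction_on with
  | empty => exact ⟨0, by simpa using IsGen.one⟩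
  | insert a s ha ih =>
    obtain ⟨b, hb⟩ := h a (Finset.mem_insert_self a s)
    obtain ⟨c, hc⟩ := ih fun i hi => h i (Finset.mem_insert_of_mem hi)
    exact ⟨b + c, by rw [Finset.sum_insert ha, Finset.prod_insert ha]; exact hb.mul hc⟩

lemma exists_isGen_of_mem_products {n : Fin d → ℕ} {g : MvPolynomial (Fin d ⊕ Fin d) K}
    (h : g ∈ products K n) : ∃ b, IsGen K n b g := by
  obtain ⟨p, q, hn, rfl⟩ := h
  obtain ⟨b, hb⟩ := IsGen.prod (K := K) Finset.univ (fun k : Fin d => p k • Pi.single k 1)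
    (fun k => X (Sum.inl k) ^ p k) fun k _ =>
      IsGen.pow (b := 0) (by simpa using (IsGen.one (K := K)).mulX k) (p k)
  obtain ⟨c, hc⟩ := IsGen.prod (K := K) Finset.univ
    (fun i : Fin d => ∑ j, if i < j then q i j • (Pi.single i 1 + Pi.single j 1) else 0)
    (fun i => ∏ j, if i < j then det K i j ^ q i j else 1) fun i _ => by
      refine IsGen.prod _ _ _ fun j _ => ?_
      split_ifs
      · exact IsGen.pow (b := 1) (by simpa using (IsGen.one (K := K)).mulDet i j) (q i j)
      · exact ⟨0, IsGen.one⟩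
  refine ⟨b + c, ?_⟩
  convert hb.mul hc using 1
  ext k
  have e0 : (∑ l, p l • (Pi.single l 1 : Fin d → ℕ)) k = p k := by
    simp [Finset.sum_apply, Pi.single_apply]
  have e1 : ∀ i j, (if i < j then q i j • (Pi.single i 1 + Pi.single j 1 : Fin d → ℕ) else 0) k =
      (if i = k then (if i < j then q i j else 0) else 0) +
        (if j = k then (if i < j then q i j else 0) else 0) := by
    intro i j
    by_cases h : i < j <;> simp [h, Pi.single_apply, eq_comm (a := k), mul_add]
  rw [← hn k, Pi.add_apply, e0, Finset.sum_apply]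
  simp only [Finset.sum_apply, e1, Finset.sum_add_distrib]
  have e2 : (∑ i, ∑ j, if i = k then (if i < j then q i j else 0) else 0) =
      ∑ j, if k < j then q k j else 0 := by
    rw [Finset.sum_comm]; simp
  rw [e2]
  simp [add_assoc]

end Nowicki

open Finset in
/-- Key step of the paper: for each multidegree `n ∈ ℕ^d`, the space of constants of `δ`
inside the multihomogeneous component `K[X_d,Y_d]^{(n)}` is spanned over `K` by the
products `x_1^{p_1}⋯x_d^{p_d} ∏_{i<j} (x_i y_j − x_j y_i)^{q_{ij}}` of multidegree `n`,
i.e. those with `p_k + Σ_{j>k} q_{kj} + Σ_{i<k} q_{ik} = n_k` for each `k`. -/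
theorem nowicki_homogeneous_constants_spanned (K : Type*) [Field K] [CharZero K]
    (d : ℕ) (hd : 1 ≤ d)
    (x y : Fin d → MvPolynomial (Fin d ⊕ Fin d) K)
    (hx : ∀ i, x i = MvPolynomial.X (Sum.inl i))
    (hy : ∀ i, y i = MvPolynomial.X (Sum.inr i))
    (δ : Derivation K (MvPolynomial (Fin d ⊕ Fin d) K) (MvPolynomial (Fin d ⊕ Fin d) K))
    (hδx : ∀ i, δ (x i) = 0) (hδy : ∀ i, δ (y i) = x i)
    (component : (Fin d → ℕ) → Submodule K (MvPolynomial (Fin d ⊕ Fin d) K))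
    (hcomponent : ∀ n : Fin d → ℕ,
      component n = Submodule.span K
        {p | ∃ m : (Fin d ⊕ Fin d) →₀ ℕ,
          (∀ k : Fin d, m (Sum.inl k) + m (Sum.inr k) = n k) ∧
          p = MvPolynomial.monomial m (1 : K)}) :
    ∀ n : Fin d → ℕ,
      component n ⊓ LinearMap.ker δ.toLinearMap =
        Submodule.span K
          {g | ∃ (p : Fin d → ℕ) (q : Fin d → Fin d → ℕ),
            (∀ k : Fin d,
              p k + (∑ j : Fin d, if k < j then q k j else 0)
                  + (∑ i : Fin d, if i < k then q i k else 0) = n k) ∧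
            g = (∏ k : Fin d, x k ^ p k) *
                  ∏ i : Fin d, ∏ j : Fin d,
                    if i < j then (x i * y j - x j * y i) ^ q i j else 1} := by
  intro n
  obtain rfl : x = fun i => MvPolynomial.X (Sum.inl i) := funext hx
  obtain rfl : y = fun i => MvPolynomial.X (Sum.inr i) := funext hy
  obtain rfl : δ = Nowicki.lower K d := by
    refine MvPolynomial.derivation_ext fun i => ?_
    rcases i with i | i
    · simpa using hδx i
    · simpa using hδy i
  rw [hcomponent, Nowicki.span_monomial_eq_iSup]
  change _ = Submodule.span K (Nowicki.products K n)
  apply le_antisymm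
  · rintro f ⟨hf, hδ⟩
    exact (iSup_le fun b => Nowicki.gens_le_span_products n b) (Nowicki.mem_iSup_gens n hf hδ)
  · refine Submodule.span_le.2 fun g hg => ?_
    obtain ⟨b, hb⟩ := Nowicki.exists_isGen_of_mem_products hg
    exact ⟨Submodule.mem_iSup_of_mem b (Nowicki.gens_le_comp n b hb.mem), hb.lower_eq_zero⟩
end
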